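/- Let V = (v_1, …, v_n) be a vector configuration spanning ℝ^d, let 𝕋 be a complete triangulation of V, and let E_1, …, E_N be a shelling of 𝕋 with indices i_1, …, i_N. Then for every k with 0 ≤ k ≤ d, the number of α ∈ {1, …, N} with i_α = k equals h_k, the k-th entry of the h-vector of 𝕋. In particular, the number of maximal simplices of each index does not depend on the choice of shelling. -/

import Mathlib

/-!
For each maximal simplex `E α` of the shelling let `R α ⊆ E α` be its restriction set: the vertices
`i` whose opposite facet lies in the union of the earlier cones, so that `shellingIndex` is
`(R α).card`. A face `σ ⊆ E α` is contained in no earlier `E β` exactly when `R α ⊆ σ`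
(`restriction_subset_iff`). To see this, test with the point `∑ j ∈ σ, V j` of the relative interior
of `cone σ`: by linear independence it lies in the cone of another face `ρ ⊆ E α` only if `σ ⊆ ρ`.

Sending a simplex to the first `E α` containing it therefore partitions `T` into the Boolean
intervals `[R α, E α]`, and an interval whose bottom has `r` elements contains
`(d - r).choose (j - r)` simplices of cardinality `j` (`fNum_eq_sum`). Substituting into the
definition of `h_k`, the trinomial revision
`(d - r).choose (j - r) * (d - j).choose (k - j) = (d - r).choose (k - r) * (k - r).choose (j - r)`
turns each interval's contribution into an alternating sum of binomial coefficients, which is `1`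
if `r = k` and `0` otherwise (`sum_choose_eq_ite`).
-/

/-- The cone over a subset `τ` of the indices of a vector configuration `V`:
all nonnegative linear combinations of the vectors `(v_j)_{j ∈ τ}`.
(`coneOf V ∅ = {0}`.) -/
def coneOf {n d : ℕ} (V : Fin n → (Fin d → ℝ)) (τ : Finset (Fin n)) : Set (Fin d → ℝ) :=
  {x | ∃ t : Fin n → ℝ, (∀ j, 0 ≤ t j) ∧ x = ∑ j ∈ τ, t j • V j}

/-- A triangulation of a vector configuration `V`: a nonempty finite collection of
simplices (index sets of linearly independent subfamilies), closed under taking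
subsets, such that the cones over any two members intersect along the cone over
their intersection. -/
def IsTriangulation {n d : ℕ} (V : Fin n → (Fin d → ℝ)) (T : Finset (Finset (Fin n))) : Prop :=
  T.Nonempty ∧
  (∀ τ ∈ T, LinearIndependent ℝ (fun j : τ => V j)) ∧
  (∀ τ ∈ T, ∀ τ' ⊆ τ, τ' ∈ T) ∧
  (∀ τ ∈ T, ∀ τ' ∈ T, coneOf V τ ∩ coneOf V τ' = coneOf V (τ ∩ τ'))

/-- A triangulation is complete if every simplex is contained in a maximal one
(a simplex of cardinality `d`) and the union of all its cones is all of `ℝ^d`. -/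
def IsCompleteTriangulation {n d : ℕ} (V : Fin n → (Fin d → ℝ)) (T : Finset (Finset (Fin n))) : Prop :=
  (∀ τ ∈ T, ∃ E ∈ T, τ ⊆ E ∧ E.card = d) ∧
  (⋃ τ ∈ T, coneOf V τ) = Set.univ

/-- `f_j`: the number of simplices of `T` of cardinality `j`
(so `f_0 = 1`, counting the empty simplex). -/
def fNum {n : ℕ} (T : Finset (Finset (Fin n))) (j : ℕ) : ℕ :=
  (T.filter fun τ => τ.card = j).card

/-- The `h`-vector of a triangulation:
`h_k = ∑_{j=0}^{k} (−1)^{k−j} * binom(d−j, k−j) * f_j`. -/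
def hNum {n : ℕ} (d : ℕ) (T : Finset (Finset (Fin n))) (k : ℕ) : ℤ :=
  ∑ j ∈ Finset.range (k + 1),
    (-1 : ℤ) ^ (k - j) * (Nat.choose (d - j) (k - j) : ℤ) * (fNum T j : ℤ)

/-- `E_1, …, E_N` is a shelling of the triangulation `T`: it enumerates all maximal
simplices of `T`, and for each `α ≥ 2` the intersection of `cone(E_α)` with the union
of the previous cones is a nonempty union of facets `cone(E_α \ {i})`, `i ∈ E_α`. -/
def IsShelling {n d : ℕ} (V : Fin n → (Fin d → ℝ)) (T : Finset (Finset (Fin n)))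
    {N : ℕ} (E : Fin N → Finset (Fin n)) : Prop :=
  Function.Injective E ∧
  Set.range E = {τ | τ ∈ T ∧ τ.card = d} ∧
  ∀ α : Fin N, 0 < (α : ℕ) →
    ∃ S : Finset (Fin n), S ⊆ E α ∧ S.Nonempty ∧
      coneOf V (E α) ∩ (⋃ β : Fin N, ⋃ _ : β < α, coneOf V (E β)) =
        ⋃ i ∈ S, coneOf V ((E α).erase i)

/-- The index `i_α` of the maximal simplex `E_α` with respect to a shelling: the number
of `i ∈ E_α` such that the facet `cone(E_α \ {i})` is contained in the union of the
previous cones. (For `α = 1` this is `0`.) -/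
noncomputable def shellingIndex {n d : ℕ} (V : Fin n → (Fin d → ℝ))
    {N : ℕ} (E : Fin N → Finset (Fin n)) (α : Fin N) : ℕ :=
  Set.ncard {i : Fin n | i ∈ E α ∧
    coneOf V ((E α).erase i) ⊆ ⋃ β : Fin N, ⋃ _ : β < α, coneOf V (E β)}

section Geometry

variable {n d : ℕ} {V : Fin n → (Fin d → ℝ)}

lemma coneOf_mono {σ τ : Finset (Fin n)} (h : σ ⊆ τ) : coneOf V σ ⊆ coneOf V τ := by
  rintro x ⟨t, ht, rfl⟩
  refine ⟨fun j => if j ∈ σ then t j else 0, fun j => ?_, ?_⟩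
  · dsimp only
    split_ifs
    exacts [ht j, le_rfl]
  · rw [← Finset.sum_subset h (fun j _ hj => by simp [hj])]
    exact Finset.sum_congr rfl fun j hj => by simp [hj]

lemma sum_mem_coneOf (σ : Finset (Fin n)) : ∑ j ∈ σ, V j ∈ coneOf V σ :=
  ⟨fun _ => 1, fun _ => zero_le_one, by simp⟩

/-- The sum of the generators of a face lies in the relative interior of its cone, so it belongs to
the cone of another face of the same simplex only if that face is larger. -/
lemma sum_mem_coneOf_iff {τ σ ρ : Finset (Fin n)}
    (hτ : LinearIndependent ℝ (fun j : τ => V j)) (hσ : σ ⊆ τ) (hρ : ρ ⊆ τ) :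
    ∑ j ∈ σ, V j ∈ coneOf V ρ ↔ σ ⊆ ρ := by
  refine ⟨?_, fun h => coneOf_mono h (sum_mem_coneOf σ)⟩
  rintro ⟨t, -, h⟩ i hi
  by_contra hiρ
  have hli : LinearIndepOn ℝ V (τ : Set (Fin n)) := hτ
  rw [linearIndepOn_finset_iff] at hli
  have key := hli (fun j => (if j ∈ σ then 1 else 0) - (if j ∈ ρ then t j else 0)) (by
    simp only [sub_smul, ite_smul, one_smul, zero_smul, Finset.sum_sub_distrib,
      Finset.sum_ite_mem, Finset.inter_eq_right.2 hσ, Finset.inter_eq_right.2 hρ, h, sub_self])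
    i (hσ hi)
  simp [hi, hiρ] at key

variable {T : Finset (Finset (Fin n))} {N : ℕ} {E : Fin N → Finset (Fin n)}

/-- The restriction set of `E α`: the vertices whose opposite facet is covered by the earlier
cones. -/
noncomputable def restriction (V : Fin n → (Fin d → ℝ)) (E : Fin N → Finset (Fin n))
    (α : Fin N) : Finset (Fin n) :=
  open Classical in
  {i ∈ E α | coneOf V ((E α).erase i) ⊆ ⋃ β : Fin N, ⋃ _ : β < α, coneOf V (E β)}

lemma restriction_subset (α : Fin N) : restriction V E α ⊆ E α := by
  classical
  exact Finset.filter_subset _ _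

lemma shellingIndex_eq_card (α : Fin N) : shellingIndex V E α = (restriction V E α).card := by
  rw [shellingIndex, ← Set.ncard_coe_finset]
  congr 1
  ext i
  simp [restriction]

lemma IsShelling.mem (hE : IsShelling V T E) (α : Fin N) : E α ∈ T ∧ (E α).card = d := by
  have : E α ∈ Set.range E := ⟨α, rfl⟩
  rwa [hE.2.1] at this

lemma sum_mem_iUnion_iff (hT : IsTriangulation V T) (hE : IsShelling V T E) {α : Fin N}
    {σ : Finset (Fin n)} (hσ : σ ⊆ E α) :
    ∑ j ∈ σ, V j ∈ (⋃ β : Fin N, ⋃ _ : β < α, coneOf V (E β)) ↔ ∃ β < α, σ ⊆ E β := by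
  simp only [Set.mem_iUnion, exists_prop]
  refine exists_congr fun β => and_congr_right fun _ => ⟨fun h => ?_, fun h => ?_⟩
  · have h2 : ∑ j ∈ σ, V j ∈ coneOf V (E α) ∩ coneOf V (E β) :=
      ⟨coneOf_mono hσ (sum_mem_coneOf σ), h⟩
    rw [hT.2.2.2 _ (hE.mem α).1 _ (hE.mem β).1, sum_mem_coneOf_iff
      (hT.2.1 _ (hE.mem α).1) hσ Finset.inter_subset_left] at h2
    exact h2.trans Finset.inter_subset_right
  · exact coneOf_mono h (sum_mem_coneOf σ)

lemma mem_restriction_iff (hT : IsTriangulation V T) (hE : IsShelling V T E) {α : Fin N}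
    {i : Fin n} : i ∈ restriction V E α ↔ i ∈ E α ∧ ∃ β < α, (E α).erase i ⊆ E β := by
  simp only [restriction, Finset.mem_filter]
  refine and_congr_right fun _ => ⟨fun h => ?_, ?_⟩
  · exact (sum_mem_iUnion_iff hT hE (Finset.erase_subset _ _)).1 (h (sum_mem_coneOf _))
  · rintro ⟨β, hβ, h⟩
    exact (coneOf_mono h).trans (Set.subset_biUnion_of_mem (u := fun β => coneOf V (E β)) hβ)

/-- The faces first appearing at step `α` are exactly those of the interval
`[restriction V E α, E α]`. -/
lemma restriction_subset_iff (hT : IsTriangulation V T) (hE : IsShelling V T E) {α : Fin N}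
    {σ : Finset (Fin n)} (hσ : σ ⊆ E α) :
    restriction V E α ⊆ σ ↔ ∀ β < α, ¬ σ ⊆ E β := by
  constructor
  · intro hR β hβ hσβ
    obtain ⟨S, hS, -, hcone⟩ := hE.2.2 α ((Nat.zero_le _).trans_lt hβ)
    have hmem : ∑ j ∈ σ, V j ∈ ⋃ i ∈ S, coneOf V ((E α).erase i) := by
      rw [← hcone]
      exact ⟨coneOf_mono hσ (sum_mem_coneOf σ), (sum_mem_iUnion_iff hT hE hσ).2 ⟨β, hβ, hσβ⟩⟩
    simp only [Set.mem_iUnion, exists_prop] at hmem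
    obtain ⟨i, hi, hmem⟩ := hmem
    rw [sum_mem_coneOf_iff (hT.2.1 _ (hE.mem α).1) hσ (Finset.erase_subset _ _)] at hmem
    -- The facet opposite to `i ∈ S` is covered by earlier cones, so `i ∈ restriction ⊆ σ`,
    -- whereas `σ` is a face of that facet.
    have hiR : i ∈ restriction V E α := by
      simp only [restriction, Finset.mem_filter]
      refine ⟨hS hi, fun x hx => ?_⟩
      have : x ∈ ⋃ i ∈ S, coneOf V ((E α).erase i) := Set.mem_biUnion hi hx
      rw [← hcone] at this
      exact this.2
    simpa using hmem (hR hiR)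
  · intro h i hi
    by_contra hiσ
    obtain ⟨-, β, hβ, hsub⟩ := (mem_restriction_iff hT hE).1 hi
    exact h β hβ ((Finset.subset_erase.2 ⟨hσ, hiσ⟩).trans hsub)

end Geometry

section Counting

lemma card_filter_Icc {n : ℕ} {R F : Finset (Fin n)} (hR : R ⊆ F) (j : ℕ) :
    ((Finset.Icc R F).filter fun τ => τ.card = j).card =
      if R.card ≤ j then (F.card - R.card).choose (j - R.card) else 0 := by
  split_ifs with hj
  · rw [← Finset.card_sdiff_of_subset hR, ← Finset.card_powersetCard]
    refine Finset.card_bij' (fun τ _ => τ \ R) (fun ρ _ => ρ ∪ R) ?_ ?_ ?_ ?_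
    · intro τ hτ
      simp only [Finset.mem_filter, Finset.mem_Icc] at hτ
      rw [Finset.mem_powersetCard, Finset.card_sdiff_of_subset hτ.1.1, hτ.2]
      exact ⟨Finset.sdiff_subset_sdiff hτ.1.2 le_rfl, rfl⟩
    · intro ρ hρ
      rw [Finset.mem_powersetCard, Finset.subset_sdiff] at hρ
      simp only [Finset.mem_filter, Finset.mem_Icc]
      refine ⟨⟨Finset.subset_union_right, Finset.union_subset hρ.1.1 hR⟩, ?_⟩
      rw [Finset.card_union_of_disjoint hρ.1.2, hρ.2]
      omega
    · intro τ hτ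
      simp only [Finset.mem_filter, Finset.mem_Icc] at hτ
      exact Finset.sdiff_union_of_subset hτ.1.1
    · intro ρ hρ
      rw [Finset.mem_powersetCard, Finset.subset_sdiff] at hρ
      exact Finset.union_sdiff_cancel_right hρ.1.2
  · rw [Finset.card_eq_zero, Finset.filter_eq_empty_iff]
    rintro τ hτ rfl
    exact hj (Finset.card_le_card (Finset.mem_Icc.1 hτ).1)

/-- The simplices of cardinality `j`, counted according to the first `E α` containing them. -/
lemma fNum_eq_sum {n d : ℕ} {V : Fin n → (Fin d → ℝ)} {T : Finset (Finset (Fin n))}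
    (hT : IsTriangulation V T) (hTc : IsCompleteTriangulation V T)
    {N : ℕ} {E : Fin N → Finset (Fin n)} (hE : IsShelling V T E) (j : ℕ) :
    fNum T j = ∑ α : Fin N, if (restriction V E α).card ≤ j then
      (d - (restriction V E α).card).choose (j - (restriction V E α).card) else 0 := by
  have hcount : ∀ α, (if (restriction V E α).card ≤ j then
      (d - (restriction V E α).card).choose (j - (restriction V E α).card) else 0) =
      ((Finset.Icc (restriction V E α) (E α)).filter fun τ => τ.card = j).card := fun α => by
    rw [card_filter_Icc (restriction_subset α), (hE.mem α).2]
  simp only [hcount]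
  rw [fNum, ← Finset.card_biUnion]
  · congr 1
    ext τ
    simp only [Finset.mem_filter, Finset.mem_biUnion, Finset.mem_univ, true_and,
      Finset.mem_Icc]
    constructor
    · rintro ⟨hτ, hj⟩
      obtain ⟨F, hF, hτF, hFd⟩ := hTc.1 τ hτ
      have hFr : F ∈ Set.range E := by
        rw [hE.2.1]
        exact ⟨hF, hFd⟩
      obtain ⟨γ, rfl⟩ := hFr
      obtain ⟨α, hα, hmin⟩ := WellFounded.has_min (wellFounded_lt (α := Fin N))
        {α | τ ⊆ E α} ⟨γ, hτF⟩
      exact ⟨α, ⟨(restriction_subset_iff hT hE hα).2 fun β hβ h => hmin β h hβ, hα⟩, hj⟩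
    · rintro ⟨α, ⟨-, h⟩, hj⟩
      exact ⟨hT.2.2.1 _ (hE.mem α).1 _ h, hj⟩
  · intro α _ β _ hαβ
    rw [Function.onFun, Finset.disjoint_left]
    intro τ h1 h2
    simp only [Finset.mem_filter, Finset.mem_Icc] at h1 h2
    rcases lt_or_gt_of_ne hαβ with h | h
    · exact (restriction_subset_iff hT hE h2.1.2).1 h2.1.1 α h h1.1.2
    · exact (restriction_subset_iff hT hE h1.1.2).1 h1.1.1 β h h2.1.2

/-- The contribution to `h_k` of a Boolean interval whose bottom has cardinality `r`. -/
lemma sum_choose_eq_ite {d k r : ℕ} (hk : k ≤ d) :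
    ∑ j ∈ Finset.range (k + 1), (-1 : ℤ) ^ (k - j) * ((d - j).choose (k - j) : ℤ) *
      (((if r ≤ j then (d - r).choose (j - r) else 0 : ℕ)) : ℤ) = if r = k then 1 else 0 := by
  rcases lt_or_ge k r with hr | hr
  · rw [if_neg hr.ne']
    refine Finset.sum_eq_zero fun j hj => ?_
    rw [Finset.mem_range] at hj
    rw [if_neg (by omega)]
    simp
  obtain ⟨m, rfl⟩ := Nat.exists_eq_add_of_le hr
  rw [add_assoc, Finset.sum_range_add, Finset.sum_eq_zero, zero_add]
  · have hterm : ∀ i ∈ Finset.range (m + 1),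
        (-1 : ℤ) ^ (r + m - (r + i)) * ((d - (r + i)).choose (r + m - (r + i)) : ℤ) *
          (((if r ≤ r + i then (d - r).choose (r + i - r) else 0 : ℕ)) : ℤ) =
        ((-1) ^ m * ((d - r).choose m : ℤ)) * ((-1) ^ i * (m.choose i : ℤ)) := by
      intro i hi
      have him : i ≤ m := Nat.lt_succ_iff.1 (Finset.mem_range.1 hi)
      have hch := Nat.choose_mul (n := d - r) (k := m) (s := i) him
      have hsgn : (-1 : ℤ) ^ m * (-1) ^ i = (-1) ^ (m - i) := by
        rw [← Nat.sub_add_cancel him, pow_add, Nat.add_sub_cancel, mul_assoc, ← pow_add,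
          Even.neg_one_pow ⟨i, rfl⟩, mul_one]
      have hch' : ((d - r).choose m : ℤ) * (m.choose i : ℤ) =
          ((d - r).choose i : ℤ) * ((d - r - i).choose (m - i) : ℤ) := by exact_mod_cast hch
      rw [if_pos (Nat.le_add_right _ _), Nat.add_sub_add_left, Nat.add_sub_cancel_left,
        ← Nat.sub_sub, ← hsgn]
      linear_combination (-(-1 : ℤ) ^ m * (-1) ^ i) * hch'
    rw [Finset.sum_congr rfl hterm, ← Finset.mul_sum, Int.alternating_sum_range_choose]
    by_cases hm : m = 0
    · simp [hm]
    · simp [hm]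
  · intro j hj
    rw [if_neg (by simpa using hj)]
    simp

end Counting

/-- For any shelling of a complete triangulation `T`, the number of maximal simplices
of index `k` equals `h_k`, the `k`-th entry of the `h`-vector. In particular it does
not depend on the choice of the shelling. -/
theorem card_shellingIndex_eq_hNum {n d : ℕ} (V : Fin n → (Fin d → ℝ))
    (hV : Submodule.span ℝ (Set.range V) = ⊤)
    (T : Finset (Finset (Fin n)))
    (hT : IsTriangulation V T) (hTc : IsCompleteTriangulation V T)
    {N : ℕ} (E : Fin N → Finset (Fin n)) (hE : IsShelling V T E)
    (k : ℕ) (hk : k ≤ d) :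
    (Set.ncard {α : Fin N | shellingIndex V E α = k} : ℤ) = hNum d T k := by
  simp only [hNum, fNum_eq_sum hT hTc hE, shellingIndex_eq_card]
  push_cast only [Nat.cast_sum, Finset.mul_sum]
  rw [Finset.sum_comm, Finset.sum_congr rfl fun α _ => sum_choose_eq_ite hk]
  rw [Set.ncard_eq_toFinset_card', Finset.sum_boole]
  simp
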